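/- Fix ε > 0, an index i, and δ ∈ (0,1). There exists K₀ such that for all K ≥ K₀ the following holds. Set N = K(K−1) and let P be the set of ordered pairs (p,q) with p,q ∈ {1,…,K}, p ≠ q (so |P| = N). Let L be any prime with L ≥ (2N)^{N+ε} and set A = ⌊L/N^{N+ε}⌋. For ℓ ∈ (ZMod L)^P and offsets m = (m₁,…,m_A) ∈ (ZMod L)^A define T(ℓ) = {Σ_{p∈P} α_p·ℓ_p : α_p ∈ {0,…,N−1} for all p}, S(m,ℓ) = ⋃_{a=1}^A (m_a + T(ℓ)), and F_i(m,ℓ) = ⋃_{j≠i} (ℓ_{(i,j)} + S(m,ℓ)). Then there exists a choice of offsets m ∈ (ZMod L)^A such that the average over all ℓ ∈ (ZMod L)^P of |S(m,ℓ)|·(L − |F_i(m,ℓ)|)/L² is at least (1−δ)·N^{−ε}. -/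

import Mathlib

/-- The set `P` of ordered pairs `(p,q)`, `p ≠ q`, of users; `|P| = K(K−1)`. -/
abbrev PairIdx (K : ℕ) := {p : Fin K × Fin K // p.1 ≠ p.2}

/-- The generalized arithmetic progression
`T(ℓ) = {Σ_{p∈P} α_p·ℓ_p : α_p ∈ {0,…,N−1}}` in `ZMod L`. -/
def gapT (L : ℕ) [NeZero L] (K N : ℕ) (ℓ : PairIdx K → ZMod L) : Finset (ZMod L) :=
  Finset.image (fun α : PairIdx K → Fin N => ∑ p, (α p : ℕ) • ℓ p) Finset.univ

/-- The transmit set `S(m,ℓ) = ⋃_{a=1}^A (m_a + T)` obtained by interleaving `A`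
translates of `T`. -/
def sSet (L : ℕ) [NeZero L] {A : ℕ} (T : Finset (ZMod L)) (m : Fin A → ZMod L) :
    Finset (ZMod L) :=
  Finset.univ.biUnion (fun a : Fin A => T.image (fun t => m a + t))

/-- The interference set `F_i(m,ℓ) = ⋃_{j≠i} (ℓ_{(i,j)} + S(m,ℓ))` at receiver `i`. -/
def fSet (L : ℕ) [NeZero L] {K : ℕ} (i : Fin K) (ℓ : PairIdx K → ZMod L)
    (S : Finset (ZMod L)) : Finset (ZMod L) :=
  Finset.univ.biUnion (fun j : {j : Fin K // j ≠ i} =>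
    S.image (fun s => ℓ ⟨(i, j.1), Ne.symm j.2⟩ + s))

open Finset in
/-- A map on a finite type takes at least as many values as there are points, minus the number of
ordered pairs of distinct points at which it agrees. -/
theorem card_le_card_image_add_collisions {α β : Type*} [Fintype α] [DecidableEq α]
    [DecidableEq β] (f : α → β) :
    Fintype.card α ≤ (univ.image f).card +
      ((univ : Finset (α × α)).filter fun q => q.1 ≠ q.2 ∧ f q.1 = f q.2).card := by
  classical
  rw [← Finset.card_univ,
    ← Finset.card_filter_add_card_filter_not (s := univ) (fun x => ∀ y, f x = f y → x = y)]
  refine add_le_add ?_ ?_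
  · refine Finset.card_le_card_of_injOn f (fun x _ => by simp) ?_
    intro x hx y _ hxy
    exact (Finset.mem_filter.1 hx).2 y hxy
  · refine (Finset.card_le_card ?_).trans (Finset.card_image_le (f := Prod.fst))
    intro x hx
    obtain ⟨y, hy, hne⟩ : ∃ y, f x = f y ∧ x ≠ y := by simpa using hx
    exact Finset.mem_image.2 ⟨(x, y), by simp [hy, hne], rfl⟩

open Finset in
/-- If any two distinct points collide with probability at most `1 / L` under a random map, then
the image has expected size at least `n - n ^ 2 / L`, where `n` is the number of points. -/
theorem sum_card_image_ge {Ω α β : Type*} [Fintype Ω] [Fintype α] [DecidableEq α]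
    [DecidableEq β] (f : Ω → α → β) (L : ℝ)
    (h : ∀ x y, x ≠ y →
      ((univ.filter fun ω => f ω x = f ω y).card : ℝ) ≤ Fintype.card Ω / L)
    (hL : 0 < L) :
    (Fintype.card Ω : ℝ) * (Fintype.card α - (Fintype.card α : ℝ) ^ 2 / L) ≤
      ∑ ω, ((univ.image (f ω)).card : ℝ) := by
  classical
  have h1 : ∀ ω, (Fintype.card α : ℝ) - ∑ q : α × α,
      (if q.1 ≠ q.2 ∧ f ω q.1 = f ω q.2 then (1 : ℝ) else 0) ≤ (univ.image (f ω)).card := by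
    intro ω
    have := card_le_card_image_add_collisions (f ω)
    rw [sum_boole, sub_le_iff_le_add]
    exact_mod_cast this
  have h2 : ∑ ω, ∑ q : α × α,
      (if q.1 ≠ q.2 ∧ f ω q.1 = f ω q.2 then (1 : ℝ) else 0) ≤
        (Fintype.card α : ℝ) ^ 2 * (Fintype.card Ω / L) := by
    rw [sum_comm]
    refine (sum_le_card_nsmul _ _ (Fintype.card Ω / L : ℝ) ?_).trans_eq ?_
    · rintro ⟨x, y⟩ -
      by_cases hxy : x = y
      · simp only [hxy, ne_eq, not_true_eq_false, false_and, if_false, sum_const_zero]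
        positivity
      · simpa [hxy] using h x y hxy
    · simp [sq]
  have h3 := sum_le_sum fun ω (_ : ω ∈ univ) => h1 ω
  rw [sum_sub_distrib, sum_const, card_univ, nsmul_eq_mul] at h3
  refine le_trans (le_of_eq ?_) ((sub_le_sub_left h2 _).trans h3)
  ring

/-- A nonzero linear functional on a finite space over `ZMod L` vanishes at a fraction `1 / L`
of the points. -/
theorem card_zeros_of_ne_zero {L : ℕ} [Fact L.Prime] {V : Type*} [AddCommGroup V]
    [Module (ZMod L) V] [Fintype V] (φ : V →ₗ[ZMod L] ZMod L) (hφ : φ ≠ 0) :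
    ((Finset.univ.filter fun v => φ v = 0).card : ℝ) = Fintype.card V / L := by
  have hs : Function.Surjective φ := LinearMap.surjective hφ
  have hL : (L : ℝ) ≠ 0 := by exact_mod_cast (Fact.out : L.Prime).ne_zero
  rw [eq_div_iff hL]
  have h := AddSubgroup.card_mul_index φ.toAddMonoidHom.ker
  rw [AddSubgroup.index_ker, AddMonoidHom.range_eq_top.2 hs] at h
  have h0 : (Finset.univ.filter fun v => φ v = 0).card = Nat.card φ.toAddMonoidHom.ker := by
    rw [← Fintype.card_subtype, ← Nat.card_eq_fintype_card]
    rfl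
  rw [h0, ← Nat.card_eq_fintype_card (α := V), ← h]
  simp

section Progression

variable {ι : Type*} [Fintype ι] {L : ℕ} {A N : ℕ}

/-- The slot reached from offset `a` with multipliers `α`. -/
def slot (m : Fin A → ZMod L) (ℓ : ι → ZMod L) (x : Fin A × (ι → Fin N)) : ZMod L :=
  m x.1 + ∑ p, (x.2 p : ℕ) • ℓ p

/-- `slot` at a fixed index, as a linear functional of the offsets and generators. -/
def slotLinear (x : Fin A × (ι → Fin N)) :
    ((Fin A → ZMod L) × (ι → ZMod L)) →ₗ[ZMod L] ZMod L where
  toFun ω := slot ω.1 ω.2 x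
  map_add' u v := by
    simp only [slot, Prod.fst_add, Prod.snd_add, Pi.add_apply, smul_add, Finset.sum_add_distrib]
    abel
  map_smul' c u := by
    simp only [slot, Prod.smul_fst, Prod.smul_snd, Pi.smul_apply, smul_eq_mul, RingHom.id_apply,
      mul_add, Finset.mul_sum, nsmul_eq_mul]
    congr 1
    exact Finset.sum_congr rfl fun p _ => by ring

theorem slotLinear_injective [Fact L.Prime] (hN : N ≤ L) :
    Function.Injective (slotLinear (L := L) : Fin A × (ι → Fin N) → _) := by
  classical
  rintro ⟨a, α⟩ ⟨b, β⟩ h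
  have hab : a = b := by
    by_contra hne
    have := LinearMap.congr_fun h (Pi.single a 1, 0)
    simp [slotLinear, slot, Ne.symm hne] at this
  have hαβ : α = β := by
    ext p
    have := LinearMap.congr_fun h (0, Pi.single p 1)
    simp only [slotLinear, slot, LinearMap.coe_mk, AddHom.coe_mk, Pi.zero_apply, zero_add,
      Pi.single_apply, nsmul_eq_mul, mul_ite, mul_one, mul_zero, Finset.sum_ite_eq',
      Finset.mem_univ, if_true] at this
    rwa [ZMod.natCast_eq_natCast_iff', Nat.mod_eq_of_lt ((α p).2.trans_le hN),
      Nat.mod_eq_of_lt ((β p).2.trans_le hN)] at this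
  rw [hab, hαβ]

theorem sum_card_image_slot_ge [DecidableEq ι] [NeZero L] (hL : L.Prime) (hN : N ≤ L) :
    ((L : ℝ) ^ A * (L : ℝ) ^ Fintype.card ι) *
        ((A * N ^ Fintype.card ι : ℕ) - ((A * N ^ Fintype.card ι : ℕ) : ℝ) ^ 2 / L) ≤
      ∑ m : Fin A → ZMod L, ∑ ℓ : ι → ZMod L,
        ((Finset.univ.image (slot (N := N) m ℓ)).card : ℝ) := by
  have : Fact L.Prime := ⟨hL⟩
  have h := sum_card_image_ge (Ω := (Fin A → ZMod L) × (ι → ZMod L))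
    (fun ω (x : Fin A × (ι → Fin N)) => slot ω.1 ω.2 x) L ?_ (by exact_mod_cast hL.pos)
  · rw [Fintype.sum_prod_type] at h
    simpa [ZMod.card] using h
  · intro x y hxy
    rw [← card_zeros_of_ne_zero (slotLinear x - slotLinear y)
      (sub_ne_zero.2 ((slotLinear_injective hN).ne hxy))]
    simp only [LinearMap.sub_apply, sub_eq_zero]
    exact le_rfl

end Progression

theorem sSet_gapT (L : ℕ) [NeZero L] {A K N : ℕ} (m : Fin A → ZMod L)
    (ℓ : PairIdx K → ZMod L) :
    sSet L (gapT L K N ℓ) m = Finset.univ.image (slot (N := N) m ℓ) := by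
  ext z
  simp [sSet, gapT, slot, eq_neg_add_iff_add_eq]

theorem fSet_subset (L : ℕ) [NeZero L] {A K N : ℕ} (i : Fin K) (m : Fin A → ZMod L)
    (ℓ : PairIdx K → ZMod L) :
    fSet L i ℓ (sSet L (gapT L K N ℓ) m) ⊆ Finset.univ.image (slot (N := N + 1) m ℓ) := by
  rw [sSet_gapT]
  intro z hz
  simp only [fSet, Finset.mem_biUnion, Finset.mem_image, Finset.mem_univ, true_and] at hz
  obtain ⟨j, _, ⟨⟨a, α⟩, rfl⟩, rfl⟩ := hz
  refine Finset.mem_image.2 ⟨(a, fun p => if p = ⟨(i, j.1), Ne.symm j.2⟩ then (α p).succ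
    else (α p).castSucc), Finset.mem_univ _, ?_⟩
  have h : ∀ p : PairIdx K, (((if p = ⟨(i, j.1), Ne.symm j.2⟩ then (α p).succ
      else (α p).castSucc : Fin (N + 1)) : ℕ) • ℓ p) =
      (α p : ℕ) • ℓ p + if p = ⟨(i, j.1), Ne.symm j.2⟩ then ℓ p else 0 := by
    intro p
    split_ifs <;> simp [add_mul]
  simp only [slot, h, Finset.sum_add_distrib, Finset.sum_ite_eq', Finset.mem_univ, if_true]
  abel

theorem card_pairIdx (K : ℕ) : Fintype.card (PairIdx K) = K * (K - 1) := by
  have h := Finset.offDiag_card (Finset.univ : Finset (Fin K))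
  rw [Finset.card_univ, Fintype.card_fin] at h
  rw [Nat.mul_sub_one, ← h, Fintype.card_subtype]
  congr 1
  ext p
  simp

theorem card_fSet_le (L : ℕ) [NeZero L] {A K N : ℕ} (i : Fin K) (m : Fin A → ZMod L)
    (ℓ : PairIdx K → ZMod L) :
    (fSet L i ℓ (sSet L (gapT L K N ℓ) m)).card ≤ A * (N + 1) ^ (K * (K - 1)) := by
  refine (Finset.card_le_card (fSet_subset L i m ℓ)).trans (Finset.card_image_le.trans_eq ?_)
  simp [← card_pairIdx]

theorem add_one_pow_self_le (N : ℕ) (hN : 0 < N) : ((N : ℝ) + 1) ^ N ≤ 3 * (N : ℝ) ^ N := by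
  have hN' : (0 : ℝ) < N := by exact_mod_cast hN
  have h1 : (1 / (N : ℝ) + 1) ^ N ≤ 3 := by
    calc (1 / (N : ℝ) + 1) ^ N ≤ Real.exp (1 / N) ^ N := by
          gcongr
          exact Real.add_one_le_exp _
      _ = Real.exp 1 := by
          rw [← Real.exp_nat_mul]
          congr 1
          field_simp
      _ ≤ 3 := by linarith [Real.exp_one_lt_d9]
  calc ((N : ℝ) + 1) ^ N = (1 / (N : ℝ) + 1) ^ N * (N : ℝ) ^ N := by
        rw [← mul_pow]
        congr 1
        field_simp
        ring
    _ ≤ 3 * (N : ℝ) ^ N := by gcongr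

open Filter Topology in
theorem eventually_loss_factor_ge (ε δ : ℝ) (hε : 0 < ε) (hδ : 0 < δ) :
    ∀ᶠ N : ℕ in atTop, (N : ℝ) ^ (-ε) ≤ 1 / 3 ∧
      1 - δ ≤ (1 - 1 / (N : ℝ)) * (1 - (N : ℝ) ^ (-ε)) * (1 - 3 * (N : ℝ) ^ (-ε)) := by
  have hx : Tendsto (fun N : ℕ => (N : ℝ) ^ (-ε)) atTop (𝓝 0) :=
    (tendsto_rpow_neg_atTop hε).comp tendsto_natCast_atTop_atTop
  have hi : Tendsto (fun N : ℕ => 1 / (N : ℝ)) atTop (𝓝 0) := tendsto_one_div_atTop_nhds_zero_nat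
  have h := ((tendsto_const_nhds (x := (1 : ℝ))).sub hi).mul
    ((tendsto_const_nhds (x := (1 : ℝ))).sub hx) |>.mul
    ((tendsto_const_nhds (x := (1 : ℝ))).sub (hx.const_mul 3))
  filter_upwards [hx.eventually_le_const (show (0 : ℝ) < 1 / 3 by norm_num),
    h.eventually_const_le (show 1 - δ < (1 - 0) * (1 - 0) * (1 - 3 * 0) by linarith)] with N h1 h2
  exact ⟨h1, h2⟩

/-- Some choice of offsets makes the transmit set at least as large as on average. -/
theorem exists_offsets_sum_card_ge {L : ℕ} [NeZero L] (hL : L.Prime) (A K N : ℕ) (hN : N ≤ L) :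
    ∃ m : Fin A → ZMod L,
      (L : ℝ) ^ (K * (K - 1)) * ((A * N ^ (K * (K - 1)) : ℕ) -
          ((A * N ^ (K * (K - 1)) : ℕ) : ℝ) ^ 2 / L) ≤
        ∑ ℓ : PairIdx K → ZMod L, ((sSet L (gapT L K N ℓ) m).card : ℝ) := by
  have h := sum_card_image_slot_ge (ι := PairIdx K) (A := A) (N := N) hL hN
  rw [card_pairIdx] at h
  obtain ⟨m, -, hm⟩ := Finset.exists_le_of_sum_le (s := (Finset.univ : Finset (Fin A → ZMod L)))
    (f := fun _ => (L : ℝ) ^ (K * (K - 1)) * ((A * N ^ (K * (K - 1)) : ℕ) -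
      ((A * N ^ (K * (K - 1)) : ℕ) : ℝ) ^ 2 / L))
    Finset.univ_nonempty (le_trans (le_of_eq (by simp [ZMod.card, mul_assoc])) h)
  exact ⟨m, by simpa only [sSet_gapT] using hm⟩

/-- The number `⌊L / N ^ (N + ε)⌋` of translates is within a factor `1 - 1 / N` of making `N ^ N`
slots per translate fill a fraction `N ^ (-ε)` of the block. -/
theorem floor_mul_pow_bounds {N : ℕ} (hN : 0 < N) {ε : ℝ} (hε : 0 < ε) {L : ℕ}
    (hL : ((2 * N : ℕ) : ℝ) ^ ((N : ℝ) + ε) ≤ L) :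
    (L : ℝ) * (N : ℝ) ^ (-ε) * (1 - 1 / N) ≤
        (⌊(L : ℝ) / (N : ℝ) ^ ((N : ℝ) + ε)⌋₊ : ℝ) * (N : ℝ) ^ N ∧
      (⌊(L : ℝ) / (N : ℝ) ^ ((N : ℝ) + ε)⌋₊ : ℝ) * (N : ℝ) ^ N ≤ L * (N : ℝ) ^ (-ε) := by
  have hN' : (0 : ℝ) < N := by exact_mod_cast hN
  set R : ℝ := (N : ℝ) ^ ((N : ℝ) + ε) with hR
  have hRpos : 0 < R := Real.rpow_pos_of_pos hN' _
  have hRx : (L : ℝ) / R * (N : ℝ) ^ N = L * (N : ℝ) ^ (-ε) := by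
    rw [hR, Real.rpow_add hN', Real.rpow_natCast, Real.rpow_neg hN'.le]
    have := (Real.rpow_pos_of_pos hN' ε).ne'
    field_simp
  have hq : (N : ℝ) ≤ L / R := by
    rw [le_div_iff₀ hRpos]
    refine le_trans ?_ hL
    rw [Nat.cast_mul, Real.mul_rpow (by positivity) hN'.le]
    refine mul_le_mul_of_nonneg_right ?_ hRpos.le
    calc (N : ℝ) ≤ (2 : ℝ) ^ N := by exact_mod_cast (Nat.lt_two_pow_self (n := N)).le
      _ = ((2 : ℕ) : ℝ) ^ (N : ℝ) := by rw [Real.rpow_natCast]; norm_num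
      _ ≤ _ := Real.rpow_le_rpow_of_exponent_le (by norm_num) (by linarith)
  rw [← hRx]
  constructor
  · rw [mul_right_comm]
    gcongr
    have h1 := Nat.lt_floor_add_one ((L : ℝ) / R)
    have h2 : 1 ≤ (L : ℝ) / R * (1 / N) := by
      rw [mul_one_div, one_le_div hN']
      exact hq
    linarith
  · gcongr
    exact Nat.floor_le (by positivity)

/-- Theorem 1 of the paper (achievability core).  Fix `ε > 0` and `δ ∈ (0,1)`.  For
all sufficiently large `K`, every user index `i`, every prime `L ≥ (2N)^{N+ε}` where
`N = K(K−1)`, and `A = ⌊L/N^{N+ε}⌋`, there is a choice of offsets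
`m ∈ (ZMod L)^A` such that the average over all `ℓ ∈ (ZMod L)^P` of
`|S(m,ℓ)|·(L − |F_i(m,ℓ)|)/L²` — the expected fraction of interference-free data
slots — is at least `(1−δ)·N^{−ε}`. -/
theorem exists_good_offsets (ε δ : ℝ) (hε : 0 < ε) (hδ0 : 0 < δ) (hδ1 : δ < 1) :
    ∃ K₀ : ℕ, ∀ K : ℕ, K₀ ≤ K → ∀ i : Fin K,
      ∀ (L : ℕ) [NeZero L], Nat.Prime L →
        ((2 * (K * (K - 1)) : ℕ) : ℝ) ^ (((K * (K - 1) : ℕ) : ℝ) + ε) ≤ (L : ℝ) →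
        ∃ m : Fin (Nat.floor ((L : ℝ) /
              ((K * (K - 1) : ℕ) : ℝ) ^ (((K * (K - 1) : ℕ) : ℝ) + ε))) → ZMod L,
          (1 - δ) * ((K * (K - 1) : ℕ) : ℝ) ^ (-ε) ≤
            (∑ ℓ : PairIdx K → ZMod L,
                ((sSet L (gapT L K (K * (K - 1)) ℓ) m).card : ℝ) *
                  ((L : ℝ) -
                    ((fSet L i ℓ (sSet L (gapT L K (K * (K - 1)) ℓ) m)).card : ℝ))
                  / (L : ℝ) ^ 2)
              / (L : ℝ) ^ (K * (K - 1)) := by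
  obtain ⟨N₀, hN₀⟩ := Filter.eventually_atTop.1 (eventually_loss_factor_ge ε δ hε hδ0)
  refine ⟨max 2 N₀, fun K hK i L _ hLp hL => ?_⟩
  have hK2 : 2 ≤ K := (le_max_left _ _).trans hK
  have hKN : K ≤ K * (K - 1) := Nat.le_mul_of_pos_right _ (by omega)
  obtain ⟨hx3, hloss⟩ := hN₀ (K * (K - 1)) (((le_max_right _ _).trans hK).trans hKN)
  have hNpos : 0 < K * (K - 1) := by omega
  obtain ⟨hlow, hupp⟩ := floor_mul_pow_bounds hNpos hε hL
  have hNL : K * (K - 1) ≤ L := by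
    have h1 : (1 : ℝ) ≤ ((2 * (K * (K - 1)) : ℕ) : ℝ) := by exact_mod_cast (by omega)
    have h2 : (1 : ℝ) ≤ ((K * (K - 1) : ℕ) : ℝ) := by exact_mod_cast hNpos
    have h3 := (Real.self_le_rpow_of_one_le h1 (by linarith : 1 ≤ _ + ε)).trans hL
    have h4 : 2 * (K * (K - 1)) ≤ L := by exact_mod_cast h3
    omega
  have hpow := add_one_pow_self_le _ hNpos
  obtain ⟨m, hm⟩ := exists_offsets_sum_card_ge hLp
    ⌊(L : ℝ) / ((K * (K - 1) : ℕ) : ℝ) ^ (((K * (K - 1) : ℕ) : ℝ) + ε)⌋₊ K (K * (K - 1)) hNL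
  refine ⟨m, ?_⟩
  have hF : ∀ ℓ : PairIdx K → ZMod L,
      ((fSet L i ℓ (sSet L (gapT L K (K * (K - 1)) ℓ) m)).card : ℝ) ≤ _ :=
    fun ℓ => Nat.cast_le.2 (card_fSet_le L i m ℓ)
  generalize ⌊(L : ℝ) / ((K * (K - 1) : ℕ) : ℝ) ^ (((K * (K - 1) : ℕ) : ℝ) + ε)⌋₊ = A at *
  generalize K * (K - 1) = N at *
  have hLpos : (0 : ℝ) < L := by exact_mod_cast hLp.pos
  have hN1 : (1 : ℝ) ≤ N := by exact_mod_cast hNpos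
  have hxpos : (0 : ℝ) < (N : ℝ) ^ (-ε) := Real.rpow_pos_of_pos (by linarith) _
  generalize (N : ℝ) ^ (-ε) = x at *
  push_cast at hm hF
  set M : ℝ := A * (N : ℝ) ^ N with hM
  have hM0 : 0 ≤ M := by positivity
  have hF' : ∀ ℓ : PairIdx K → ZMod L,
      ((fSet L i ℓ (sSet L (gapT L K N ℓ) m)).card : ℝ) ≤ 3 * (L * x) := fun ℓ =>
    calc _ ≤ (A : ℝ) * ((N : ℝ) + 1) ^ N := hF ℓ
      _ ≤ A * (3 * (N : ℝ) ^ N) := by gcongr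
      _ = 3 * M := by ring
      _ ≤ 3 * (L * x) := by gcongr
  have hS : (L : ℝ) * x * (1 - 1 / N) * (1 - x) ≤ M - M ^ 2 / L :=
    calc _ ≤ M * (1 - x) := mul_le_mul_of_nonneg_right hlow (by linarith)
      _ ≤ M * (1 - M / L) := by
        gcongr
        rw [div_le_iff₀ hLpos]
        linarith
      _ = _ := by ring
  rw [le_div_iff₀ (by positivity)]
  calc (1 - δ) * x * (L : ℝ) ^ N
      ≤ ((1 - 1 / (N : ℝ)) * (1 - x) * (1 - 3 * x)) * x * (L : ℝ) ^ N := by gcongr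
    _ = (L : ℝ) ^ N * ((L : ℝ) * x * (1 - 1 / N) * (1 - x)) * ((1 - 3 * x) / L) := by
        field_simp
    _ ≤ (∑ ℓ : PairIdx K → ZMod L, ((sSet L (gapT L K N ℓ) m).card : ℝ)) *
          ((1 - 3 * x) / L) := by
        refine mul_le_mul_of_nonneg_right (le_trans ?_ hm)
          (div_nonneg (by linarith) hLpos.le)
        gcongr
    _ ≤ _ := by
        rw [Finset.sum_mul]
        refine Finset.sum_le_sum fun ℓ _ => ?_
        rw [mul_div_assoc]
        refine mul_le_mul_of_nonneg_left ?_ (Nat.cast_nonneg _)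
        rw [div_le_div_iff₀ hLpos (by positivity)]
        nlinarith [hF' ℓ, mul_le_mul_of_nonneg_left (hF' ℓ) hLpos.le]
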